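/- arXiv:2101.10407 — 5 statements merged into one kernel-verified Lean document; each statement's English description precedes it below -/
import Mathlib

section
/- Let n ≥ 1, let P ⊆ EuclideanSpace ℝ (Fin n), x₀ ∈ P, and N ∈ EuclideanSpace ℝ (Fin n). Suppose there is an open neighborhood U of x₀ such that U ∩ {y | ⟪y - x₀, N⟫ ≤ 0} ⊆ P (i.e., near x₀ the set P contains the whole inner side of the hyperplane through x₀ with normal N). Let x : ℝ → EuclideanSpace ℝ (Fin n) have derivative v at t₀ with x t₀ = x₀. If the trajectory escapes P through x₀, i.e., for every ε > 0 there exists δ with 0 < δ < ε and x (t₀ + δ) ∉ P, then ⟪v, N⟫ ≥ 0. (Contrapositive form of the paper's Theorem 1: a point satisfying the invariance condition strictly admits no escaping trajectory.) -/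
open scoped RealInnerProductSpace

/-!
Along the trajectory, `t ↦ ⟪x t - x₀, N⟫` vanishes at `t₀`. Near `x₀` a point outside `P` lies
strictly on the outer side of the hyperplane, so an escaping trajectory makes this function positive
at times arbitrarily close to `t₀` from the right. Its right derivative `⟪v, N⟫` is therefore a
cluster value of nonnegative slopes.
-/

open Filter Set Topology

theorem frequently_nhdsGT_iff_exists_add {α : Type*} [AddCommGroup α] [LinearOrder α]
    [IsOrderedAddMonoid α] [NoMaxOrder α] [TopologicalSpace α] [OrderTopology α]
    {p : α → Prop} {t₀ : α} :
    (∃ᶠ t in 𝓝[>] t₀, p t) ↔ ∀ ε > 0, ∃ δ, 0 < δ ∧ δ < ε ∧ p (t₀ + δ) := by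
  rw [(nhdsGT_basis t₀).frequently_iff]
  constructor
  · intro h ε hε
    obtain ⟨t, ⟨ht₀, htε⟩, hp⟩ := h _ (lt_add_of_pos_right t₀ hε)
    exact ⟨t - t₀, sub_pos.2 ht₀, sub_lt_iff_lt_add'.2 htε, by rwa [add_sub_cancel]⟩
  · intro h b hb
    obtain ⟨δ, hδ₀, hδb, hp⟩ := h (b - t₀) (sub_pos.2 hb)
    exact ⟨t₀ + δ, ⟨lt_add_of_pos_right t₀ hδ₀, lt_sub_iff_add_lt'.1 hδb⟩, hp⟩

theorem right_deriv_nonneg_of_frequently_ge {f : ℝ → ℝ} {f' t₀ : ℝ}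
    (hf : HasDerivWithinAt f f' (Ioi t₀) t₀) (hge : ∃ᶠ t in 𝓝[>] t₀, f t₀ ≤ f t) :
    0 ≤ f' := by
  have hslope : Tendsto (slope f t₀) (𝓝[>] t₀) (𝓝 f') :=
    (hasDerivWithinAt_iff_tendsto_slope' self_notMem_Ioi).1 hf
  refine ge_of_tendsto_of_frequently hslope ?_
  exact (hge.and_eventually self_mem_nhdsWithin).mono fun t ⟨hft, ht⟩ ↦
    (slope_nonneg_iff_of_le (le_of_lt ht)).2 hft

theorem fderiv_apply_nonneg_of_frequently_notMem {E : Type*} [NormedAddCommGroup E]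
    [NormedSpace ℝ E] {P : Set E} {g : E → ℝ} {g' : E →L[ℝ] ℝ} {x : ℝ → E} {v : E} {t₀ : ℝ}
    (hP : P ∈ 𝓝[{y | g y ≤ g (x t₀)}] x t₀) (hg : HasFDerivAt g g' (x t₀))
    (hx : HasDerivWithinAt x v (Ioi t₀) t₀) (hesc : ∃ᶠ t in 𝓝[>] t₀, x t ∉ P) :
    0 ≤ g' v := by
  have hinner : ∀ᶠ t in 𝓝[>] t₀, g (x t) ≤ g (x t₀) → x t ∈ P :=
    hx.continuousWithinAt.eventually (eventually_nhdsWithin_iff.1 hP)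
  refine right_deriv_nonneg_of_frequently_ge (hg.comp_hasDerivWithinAt t₀ hx) ?_
  exact (hesc.and_eventually hinner).mono fun t ⟨hnotMem, hmem⟩ ↦
    (not_le.1 (mt hmem hnotMem)).le

theorem stmt_1_general {E : Type*} [NormedAddCommGroup E] [InnerProductSpace ℝ E]
    {P : Set E} {x₀ N : E} (hP : P ∈ 𝓝[{y | ⟪y - x₀, N⟫ ≤ 0}] x₀)
    {x : ℝ → E} {v : E} {t₀ : ℝ}
    (hx : HasDerivWithinAt x v (Ioi t₀) t₀) (hxt₀ : x t₀ = x₀)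
    (hesc : ∃ᶠ t in 𝓝[>] t₀, x t ∉ P) :
    0 ≤ ⟪v, N⟫ := by
  subst hxt₀
  have hsublevel : {y | ⟪N, y⟫ ≤ ⟪N, x t₀⟫} = {y | ⟪y - x t₀, N⟫ ≤ 0} := by
    simp only [real_inner_comm, inner_sub_right, sub_nonpos]
  rw [← real_inner_comm]
  exact fderiv_apply_nonneg_of_frequently_notMem (hsublevel ▸ hP) (innerSL ℝ N).hasFDerivAt hx hesc

theorem stmt_1 (n : ℕ) (hn : 1 ≤ n)
    (P : Set (EuclideanSpace ℝ (Fin n)))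
    (x₀ N : EuclideanSpace ℝ (Fin n))
    (hx₀ : x₀ ∈ P)
    (hloc : ∃ U : Set (EuclideanSpace ℝ (Fin n)), IsOpen U ∧ x₀ ∈ U ∧
      U ∩ {y | ⟪y - x₀, N⟫ ≤ 0} ⊆ P)
    (x : ℝ → EuclideanSpace ℝ (Fin n)) (v : EuclideanSpace ℝ (Fin n)) (t₀ : ℝ)
    (hx : HasDerivAt x v t₀) (hxt₀ : x t₀ = x₀)
    (hesc : ∀ ε > 0, ∃ δ : ℝ, 0 < δ ∧ δ < ε ∧ x (t₀ + δ) ∉ P) :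
    0 ≤ ⟪v, N⟫ :=
  stmt_1_general (mem_nhdsWithin.2 hloc) hx.hasDerivWithinAt hxt₀
    (frequently_nhdsGT_iff_exists_add.2 hesc)
end

section
/- Let n ≥ 1 and let F : EuclideanSpace ℝ (Fin n) → Set (EuclideanSpace ℝ (Fin n)) be such that F x is nonempty and bounded for every x, and suppose F is ℓ-Lipschitz with respect to the Hausdorff distance for some ℓ > 0, i.e., hausdorffDist (F x) (F y) ≤ ℓ * ‖x - y‖ for all x, y. Let N be a unit vector (‖N‖ = 1), x₀ a point, and ε > 0. If ⟪u, N⟫ ≤ -ε for every u ∈ F x₀, then for every x with ‖x - x₀‖ ≤ ε / ℓ and every v ∈ F x one has ⟪v, N⟫ ≤ 0. (Paper's Theorem 2.) -/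
open scoped RealInnerProductSpace

section Lipschitz

open Metric NNReal

variable {α : Type*} [PseudoMetricSpace α] {K : ℝ≥0} {f : α → ℝ} {s t : Set α} {x : α} {a : ℝ}

theorem le_add_mul_infDist_of_lipschitzWith (hf : LipschitzWith K f) (ht : t.Nonempty)
    (hft : ∀ y ∈ t, f y ≤ a) (x : α) : f x ≤ a + K * infDist x t := by
  have := ht.to_subtype
  rw [infDist_eq_iInf, Real.mul_iInf_of_nonneg K.coe_nonneg, ← sub_le_iff_le_add']
  refine le_ciInf fun y ↦ ?_
  linarith [hf.le_add_mul x y, hft y y.2]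

theorem le_add_mul_hausdorffDist_of_lipschitzWith (hf : LipschitzWith K f)
    (hst : hausdorffEDist s t ≠ ⊤) (hft : ∀ y ∈ t, f y ≤ a) (hx : x ∈ s) :
    f x ≤ a + K * hausdorffDist s t :=
  have ht : t.Nonempty := nonempty_of_hausdorffEDist_ne_top ⟨x, hx⟩ hst
  calc
    f x ≤ a + K * infDist x t := le_add_mul_infDist_of_lipschitzWith hf ht hft x
    _ ≤ a + K * hausdorffDist s t := by
      gcongr
      exact infDist_le_hausdorffDist_of_mem hx hst

end Lipschitz

section Inner

open Metric

variable {E : Type*} [SeminormedAddCommGroup E] [InnerProductSpace ℝ E]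

theorem lipschitzWith_inner_left (w : E) : LipschitzWith ‖w‖₊ fun v : E ↦ ⟪v, w⟫ := by
  refine LipschitzWith.of_le_add_mul _ fun u v ↦ ?_
  rw [← sub_le_iff_le_add', ← inner_sub_left, dist_eq_norm, mul_comm]
  exact real_inner_le_norm (u - v) w

theorem stmt_2_general {X : Type*} [PseudoMetricSpace X] {F : X → Set E} {x₀ : X}
    (hfin : ∀ x, hausdorffEDist (F x) (F x₀) ≠ ⊤) {ℓ : ℝ} (hℓ : 0 < ℓ)
    (hLip : ∀ x, hausdorffDist (F x) (F x₀) ≤ ℓ * dist x x₀)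
    {N : E} (hN : ‖N‖ ≤ 1) {ε : ℝ} (h : ∀ u ∈ F x₀, ⟪u, N⟫ ≤ -ε) {x : X}
    (hx : dist x x₀ ≤ ε / ℓ) {v : E} (hv : v ∈ F x) : ⟪v, N⟫ ≤ 0 :=
  calc
    ⟪v, N⟫ ≤ -ε + ‖N‖ * hausdorffDist (F x) (F x₀) :=
      le_add_mul_hausdorffDist_of_lipschitzWith (lipschitzWith_inner_left N) (hfin x) h hv
    _ ≤ -ε + hausdorffDist (F x) (F x₀) := by
      gcongr
      exact mul_le_of_le_one_left hausdorffDist_nonneg hN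
    _ ≤ -ε + ℓ * dist x x₀ := by
      gcongr
      exact hLip x
    _ ≤ 0 := neg_add_nonpos_iff.mpr ((le_div_iff₀' hℓ).mp hx)

end Inner

theorem stmt_2 (n : ℕ) (hn : 1 ≤ n)
    (F : EuclideanSpace ℝ (Fin n) → Set (EuclideanSpace ℝ (Fin n)))
    (hFne : ∀ x, (F x).Nonempty) (hFbd : ∀ x, Bornology.IsBounded (F x))
    (ℓ : ℝ) (hℓ : 0 < ℓ)
    (hLip : ∀ x y, Metric.hausdorffDist (F x) (F y) ≤ ℓ * ‖x - y‖)
    (N x₀ : EuclideanSpace ℝ (Fin n)) (hN : ‖N‖ = 1)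
    (ε : ℝ) (hε : 0 < ε)
    (h : ∀ u ∈ F x₀, ⟪u, N⟫ ≤ -ε) :
    ∀ x, ‖x - x₀‖ ≤ ε / ℓ → ∀ v ∈ F x, ⟪v, N⟫ ≤ 0 := by
  have hfin (x) : Metric.hausdorffEDist (F x) (F x₀) ≠ ⊤ :=
    Metric.hausdorffEDist_ne_top_of_nonempty_of_bounded (hFne x) (hFne x₀) (hFbd x) (hFbd x₀)
  simp only [← dist_eq_norm] at hLip ⊢
  exact fun x hx v hv ↦ stmt_2_general hfin hℓ (hLip · x₀) hN.le h hx hv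
end

section
/- Let n ≥ 1 and let v : Fin n → EuclideanSpace ℝ (Fin d) be affinely independent. Let s ∈ ℝ with 0 < s ≤ 1, and for each j define b j = v 0 + s • (v j - v 0). Let a : Fin (n-1) → ℝ satisfy a i ≥ 0 for all i, and set p = v 0 + ∑ i, a i • (b (i.succ) - v 0) (the point with coordinates a in the coordinate system with origin v 0 and basis vectors b j - v 0). Then p ∈ convexHull ℝ (Set.range v) if and only if ∑ i, a i ≤ 1 / s. (Paper's Lemma 1, the coordinate-system membership criterion for the simplex.) -/
/-!
In the coordinates with origin `v 0` and basis vectors `b j - v 0 = s • (v j - v 0)`, the point with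
coordinates `a` has barycentric coordinates `a i * s` at the vertices `v i.succ` and the remaining
weight `1 - ∑ i, a i * s` at `v 0`. By affine independence the barycentric coordinates are unique,
so the point lies in the simplex exactly when all of them are nonnegative.
-/

section AffineSpace

variable {R V P : Type*} [Ring R] [AddCommGroup V] [Module R V] [AddTorsor V P]

theorem sum_smul_vsub_vadd_eq_affineCombination {m : ℕ} (v : Fin (m + 1) → P) (c : Fin m → R) :
    (∑ i, c i • (v i.succ -ᵥ v 0)) +ᵥ v 0 =
      Finset.univ.affineCombination R v (Fin.cons (1 - ∑ i, c i) c : Fin (m + 1) → R) := by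
  have sum_weights : ∑ i, (Fin.cons (1 - ∑ i, c i) c : Fin (m + 1) → R) i = 1 := by
    rw [Fin.sum_cons, sub_add_cancel]
  rw [Finset.affineCombination_eq_weightedVSubOfPoint_vadd_of_sum_eq_one _ _ _ sum_weights (v 0)]
  simp [Fin.sum_univ_succ]

end AffineSpace

section ConvexHull

variable {𝕜 E : Type*} [Field 𝕜] [LinearOrder 𝕜] [IsStrictOrderedRing 𝕜] [AddCommGroup E]
  [Module 𝕜 E]

theorem affineCombination_mem_convexHull_range_iff {ι : Type*} {v : ι → E}
    (hv : AffineIndependent 𝕜 v) {t : Finset ι} {w : ι → 𝕜} (hw : ∑ i ∈ t, w i = 1) :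
    t.affineCombination 𝕜 v w ∈ convexHull 𝕜 (Set.range v) ↔ ∀ i ∈ t, 0 ≤ w i := by
  refine ⟨fun hmem i hi => ?_, fun hw_nonneg => affineCombination_mem_convexHull hw_nonneg hw⟩
  rw [convexHull_range_eq_exists_affineCombination] at hmem
  obtain ⟨t', w', hw'_nonneg, hw', heq⟩ := hmem
  calc
    0 ≤ (t' : Set ι).indicator w' i := Set.indicator_apply_nonneg (hw'_nonneg i)
    _ = (t : Set ι).indicator w i :=
      congrFun (hv.indicator_eq_of_affineCombination_eq t' t w' w hw' hw heq) i
    _ = w i := Set.indicator_of_mem hi w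

theorem add_sum_smul_sub_mem_convexHull_range_iff {m : ℕ} {v : Fin (m + 1) → E}
    (hv : AffineIndependent 𝕜 v) (c : Fin m → 𝕜) :
    v 0 + ∑ i, c i • (v i.succ - v 0) ∈ convexHull 𝕜 (Set.range v) ↔
      (∀ i, 0 ≤ c i) ∧ ∑ i, c i ≤ 1 := by
  have barycentric : v 0 + ∑ i, c i • (v i.succ - v 0) =
      Finset.univ.affineCombination 𝕜 v (Fin.cons (1 - ∑ i, c i) c : Fin (m + 1) → 𝕜) :=
    (add_comm _ _).trans (sum_smul_vsub_vadd_eq_affineCombination v c)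
  rw [barycentric, affineCombination_mem_convexHull_range_iff hv (by simp)]
  simp [Fin.forall_fin_succ, and_comm]

theorem stmt_4_general {m : ℕ} {v : Fin (m + 1) → E} (hv : AffineIndependent 𝕜 v)
    {s : 𝕜} (hs : 0 < s) {b : Fin (m + 1) → E} (hb : ∀ j, b j = v 0 + s • (v j - v 0))
    {a : Fin m → 𝕜} (ha : ∀ i, 0 ≤ a i) {p : E} (hp : p = v 0 + ∑ i, a i • (b i.succ - v 0)) :
    p ∈ convexHull 𝕜 (Set.range v) ↔ ∑ i, a i ≤ 1 / s := by
  have hp_rescaled : p = v 0 + ∑ i, (a i * s) • (v i.succ - v 0) := by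
    simp only [hp, hb, add_sub_cancel_left, mul_smul]
  have rescaled_nonneg (i : Fin m) : 0 ≤ a i * s := mul_nonneg (ha i) hs.le
  rw [hp_rescaled, add_sum_smul_sub_mem_convexHull_range_iff hv,
    and_iff_right rescaled_nonneg, ← Finset.sum_mul, le_div_iff₀ hs]

end ConvexHull

theorem stmt_4 (n d : ℕ) (hn : 1 ≤ n)
    (v : Fin n → EuclideanSpace ℝ (Fin d))
    (hv : AffineIndependent ℝ v)
    (s : ℝ) (hs0 : 0 < s) (hs1 : s ≤ 1)
    (b : Fin n → EuclideanSpace ℝ (Fin d))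
    (hb : ∀ j, b j = v ⟨0, hn⟩ + s • (v j - v ⟨0, hn⟩))
    (a : Fin (n - 1) → ℝ) (ha : ∀ i, 0 ≤ a i)
    (p : EuclideanSpace ℝ (Fin d))
    (hp : p = v ⟨0, hn⟩ +
      ∑ i : Fin (n - 1), a i • (b (Fin.cast (Nat.succ_pred_eq_of_pos hn) i.succ) - v ⟨0, hn⟩)) :
    p ∈ convexHull ℝ (Set.range v) ↔ ∑ i, a i ≤ 1 / s := by
  obtain ⟨m, rfl⟩ := Nat.exists_eq_add_of_le' hn
  exact stmt_4_general hv hs0 hb ha hp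
end

section
/- Let P be a convex subset of EuclideanSpace ℝ (Fin n), let c lie in the interior of P, and let v and w be extreme points of P. If there exists λ > 0 with w = c + λ • (v - c) (i.e., v and w lie on the same ray emanating from c), then v = w. (Core geometric fact in the proof of the paper's Theorem 4: since no two vertices of the polytope lie on a common ray from an interior point c, the vertex maps H_j, which move each vertex along its own ray R_j(c), are bijective and induce homeomorphisms.) -/
section

variable {𝕜 E : Type*} [AddCommGroup E] {P : Set E} {c v w : E}

theorem right_eq_lineMap_of_lineMap_mem_extremePoints [Ring 𝕜] [PartialOrder 𝕜]
    [IsOrderedRing 𝕜] [Module 𝕜 E] {l : 𝕜} (hc : c ∈ P) (hv : v ∈ P) (hl₀ : 0 < l) (hl₁ : l ≤ 1)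
    (h : AffineMap.lineMap c v l ∈ P.extremePoints 𝕜) : v = AffineMap.lineMap c v l := by
  obtain rfl | hl₁ := hl₁.eq_or_lt
  · exact (AffineMap.lineMap_apply_one c v).symm
  · exact ((mem_extremePoints.1 h).2 c hc v hv (lineMap_mem_openSegment 𝕜 c v ⟨hl₀, hl₁⟩)).2

/-- Of two points on a ray from `c`, the nearer one lies between `c` and the farther one, so it
cannot be extreme unless the two coincide. -/
theorem stmt_10_general [DivisionRing 𝕜] [LinearOrder 𝕜] [IsStrictOrderedRing 𝕜] [Module 𝕜 E]
    (hc : c ∈ P) (hv : v ∈ P.extremePoints 𝕜) (hw : w ∈ P.extremePoints 𝕜)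
    (hray : ∃ l : 𝕜, 0 < l ∧ w = c + l • (v - c)) : v = w := by
  obtain ⟨l, hl, hw_eq⟩ := hray
  replace hw_eq : w = AffineMap.lineMap c v l := by
    rw [hw_eq, AffineMap.lineMap_apply_module', add_comm]
  obtain hl₁ | hl₁ := le_total l 1
  · rw [hw_eq] at hw ⊢
    exact right_eq_lineMap_of_lineMap_mem_extremePoints hc hv.1 hl hl₁ hw
  · have hv_eq : v = AffineMap.lineMap c w l⁻¹ := by
      rw [hw_eq, AffineMap.lineMap_lineMap_right, inv_mul_cancel₀ hl.ne',
        AffineMap.lineMap_apply_one]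
    rw [hv_eq] at hv ⊢
    exact (right_eq_lineMap_of_lineMap_mem_extremePoints hc hw.1 (inv_pos.2 hl)
      (inv_le_one_of_one_le₀ hl₁) hv).symm

end

theorem stmt_10 (n : ℕ)
    (P : Set (EuclideanSpace ℝ (Fin n))) (hP : Convex ℝ P)
    (c : EuclideanSpace ℝ (Fin n)) (hc : c ∈ interior P)
    (v w : EuclideanSpace ℝ (Fin n))
    (hv : v ∈ Set.extremePoints ℝ P) (hw : w ∈ Set.extremePoints ℝ P)
    (hray : ∃ l : ℝ, 0 < l ∧ w = c + l • (v - c)) :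
    v = w :=
  stmt_10_general (interior_subset hc) hv hw hray
end

section
/- Let n ≥ 1, let ι be a finite index type, N : ι → EuclideanSpace ℝ (Fin n), b : ι → ℝ, and let P = {y | ∀ i, ⟪y, N i⟫ ≤ b i} be the corresponding polyhedron. Let x : ℝ → EuclideanSpace ℝ (Fin n) and x' : ℝ → EuclideanSpace ℝ (Fin n) be such that x has derivative x' t at every t ≥ t₀, and suppose x t₀ ∈ P. If for every t ≥ t₀ and every i with ⟪x t, N i⟫ = b i one has ⟪x' t, N i⟫ < 0, then x t ∈ P for all t ≥ t₀. (Strict-inequality version of the paper's Corollary 2: if every boundary simplex of the polytope P satisfies the (strict) invariance condition along the trajectory, then P is a forward invariant set, i.e., trajectories starting in P never leave it.) -/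
open scoped RealInnerProductSpace

/-!
A polyhedron is an intersection of half-spaces, and the faces can be treated one at a time: at
every time when a face functional attains its bound, the boundary condition makes its derivative
negative, so it cannot cross the bound upwards.
-/

theorem le_of_deriv_right_neg_of_eq {f f' : ℝ → ℝ} {a c : ℝ}
    (hf : ContinuousOn f (Set.Ici a))
    (hf' : ∀ t, a ≤ t → HasDerivWithinAt f (f' t) (Set.Ici t) t)
    (ha : f a ≤ c) (hneg : ∀ t, a ≤ t → f t = c → f' t < 0) :
    ∀ t, a ≤ t → f t ≤ c := fun _ ht =>
  image_le_of_deriv_right_lt_deriv_boundary' (B := fun _ => c) (B' := fun _ => 0)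
    (hf.mono Set.Icc_subset_Ici_self) (fun s hs => hf' s hs.1) ha
    continuousOn_const (fun s _ => hasDerivWithinAt_const s _ c)
    (fun s hs => hneg s hs.1) (Set.right_mem_Icc.2 ht)

theorem stmt_12_general {E : Type*} [NormedAddCommGroup E] [NormedSpace ℝ E] {ι : Sort*}
    (ℓ : ι → E →L[ℝ] ℝ) (b : ι → ℝ) (x x' : ℝ → E) (t₀ : ℝ)
    (hcont : ContinuousOn x (Set.Ici t₀))
    (hderiv : ∀ t, t₀ ≤ t → HasDerivWithinAt x (x' t) (Set.Ici t) t)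
    (hx₀ : x t₀ ∈ {y | ∀ i, ℓ i y ≤ b i})
    (hbdry : ∀ t, t₀ ≤ t → ∀ i, ℓ i (x t) = b i → ℓ i (x' t) < 0) :
    ∀ t, t₀ ≤ t → x t ∈ {y | ∀ i, ℓ i y ≤ b i} := by
  intro t ht i
  have hℓcont : ContinuousOn (fun s => ℓ i (x s)) (Set.Ici t₀) :=
    (ℓ i).continuous.comp_continuousOn hcont
  have hℓderiv : ∀ s, t₀ ≤ s →
      HasDerivWithinAt (fun u => ℓ i (x u)) (ℓ i (x' s)) (Set.Ici s) s := fun s hs =>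
    (ℓ i).hasFDerivAt.comp_hasDerivWithinAt s (hderiv s hs)
  exact le_of_deriv_right_neg_of_eq hℓcont hℓderiv (hx₀ i) (fun s hs => hbdry s hs i) t ht

theorem stmt_12 (n : ℕ) (hn : 1 ≤ n)
    (ι : Type*) [Finite ι]
    (N : ι → EuclideanSpace ℝ (Fin n)) (b : ι → ℝ)
    (P : Set (EuclideanSpace ℝ (Fin n)))
    (hP : P = {y | ∀ i, ⟪y, N i⟫ ≤ b i})
    (x x' : ℝ → EuclideanSpace ℝ (Fin n)) (t₀ : ℝ)
    (hderiv : ∀ t, t₀ ≤ t → HasDerivAt x (x' t) t)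
    (hx₀ : x t₀ ∈ P)
    (hbdry : ∀ t, t₀ ≤ t → ∀ i, ⟪x t, N i⟫ = b i → ⟪x' t, N i⟫ < 0) :
    ∀ t, t₀ ≤ t → x t ∈ P := by
  subst hP
  exact stmt_12_general (fun i => (innerSL ℝ).flip (N i)) b x x' t₀
    (HasDerivAt.continuousOn hderiv) (fun t ht => (hderiv t ht).hasDerivWithinAt) hx₀ hbdry
end
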